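/- Upper bound on Λ(ε, τ): let 0 < ε < 1/2 and 0 < τ < 1. For each n let k_n = ⌊εn⌋ and s_n = ⌊(2 : ℝ)^(τn)⌋; let R_n be the maximum, over subsets A, B of the Boolean cube Fin n → Bool with |A| ≤ s_n and |B| ≤ s_n, of the number of pairs (x, y) ∈ A × B with Hamming distance exactly k_n; and let G_n = 2^n · (n choose k_n) be the total number of pairs (x, y) at Hamming distance exactly k_n. Then limsup_{n → ∞} (logb 2 ((R_n : ℝ) / G_n)) / n ≤ −(1 − τ)/(1 − ε). -/

import Mathlib

open Finset Filter

/-- The maximal number of pairs at Hamming distance `⌊ε n⌋` inside a rectangle `A × B`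
with `|A|, |B| ≤ ⌊2^(τ n)⌋`. -/
noncomputable def Rn (τ ε : ℝ) (n : ℕ) : ℕ :=
  ((Finset.univ.powerset.filter
      fun A : Finset (Fin n → Bool) => A.card ≤ ⌊(2 : ℝ) ^ (τ * n)⌋₊) ×ˢ
   (Finset.univ.powerset.filter
      fun B : Finset (Fin n → Bool) => B.card ≤ ⌊(2 : ℝ) ^ (τ * n)⌋₊)).sup
    fun AB => ((AB.1 ×ˢ AB.2).filter
      fun p => hammingDist p.1 p.2 = ⌊ε * n⌋₊).card

/-- The total number of pairs of points of the Boolean cube at Hamming distance `⌊ε n⌋`. -/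
noncomputable def Gn (ε : ℝ) (n : ℕ) : ℕ := 2 ^ n * n.choose ⌊ε * n⌋₊

/-- The binary entropy function (base-2 logarithms). -/
noncomputable def binH (t : ℝ) : ℝ := -t * Real.logb 2 t - (1 - t) * Real.logb 2 (1 - t)

/-!
Let `x` be uniform on the cube and let `y` arise from `x` by flipping each coordinate independently
with probability `ε ≤ 1 / 2`. By the two-point hypercontractive inequality, which tensorizes,
`P(x ∈ A, y ∈ B) ≤ (μ A * μ B) ^ (1 / p)` for `p = 2 * (1 - ε)`, where `μ` is the uniform measure.

For `ε = k / n` the value `k` is a mode of the binomial distribution of the distance between `x` and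
`y`, so it is attained with probability at least `1 / (n + 1)`. Conditionally on this event the pair
`(x, y)` is uniform among the pairs at distance `k`; hence the proportion of these pairs that lie in
`A × B` is at most `(n + 1) * (μ A * μ B) ^ (1 / p)`. For `μ A, μ B ≤ 2 ^ (-(1 - τ) * n)` this bound
has exponent `-(1 - τ) / (1 - k / n) + o(1)`, and `k / n` tends to `ε`.
-/

section Binomial

open scoped Nat

lemma factorial_mul_pow_le_factorial_mul_pow_self (k j : ℕ) : k ! * k ^ j ≤ j ! * k ^ k := by
  rcases le_total k j with hkj | hjk
  · calc k ! * k ^ j = k ! * k ^ (j - k) * k ^ k := by rw [mul_assoc, pow_sub_mul_pow k hkj]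
      _ ≤ j ! * k ^ k := by gcongr; exact Nat.factorial_mul_pow_sub_le_factorial hkj
  · calc k ! * k ^ j = j ! * k.descFactorial (k - j) * k ^ j := by
          rw [← Nat.factorial_mul_descFactorial (Nat.sub_le k j), Nat.sub_sub_self hjk]
      _ ≤ j ! * k ^ (k - j) * k ^ j := by gcongr; exact Nat.descFactorial_le_pow k (k - j)
      _ = j ! * k ^ k := by rw [mul_assoc, pow_sub_mul_pow k hjk]

/- Multiplying by `k! (n - k)!` separates the claim into the inequalities `k! kʲ ≤ j! kᵏ` for
`k, j` and for `n - k, n - j`. -/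
lemma choose_mul_pow_mul_pow_le {n j k : ℕ} (hj : j ≤ n) (hk : k ≤ n) :
    n.choose j * (k ^ j * (n - k) ^ (n - j)) ≤ n.choose k * (k ^ k * (n - k) ^ (n - k)) := by
  refine Nat.le_of_mul_le_mul_left ?_ (mul_pos k.factorial_pos (n - k).factorial_pos)
  calc k ! * (n - k)! * (n.choose j * (k ^ j * (n - k) ^ (n - j)))
      = n.choose j * ((k ! * k ^ j) * ((n - k)! * (n - k) ^ (n - j))) := by ring
    _ ≤ n.choose j * ((j ! * k ^ k) * ((n - j)! * (n - k) ^ (n - k))) := by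
        exact Nat.mul_le_mul_left _ <| Nat.mul_le_mul
          (factorial_mul_pow_le_factorial_mul_pow_self k j)
          (factorial_mul_pow_le_factorial_mul_pow_self (n - k) (n - j))
    _ = n.choose j * j ! * (n - j)! * (k ^ k * (n - k) ^ (n - k)) := by ring
    _ = n.choose k * k ! * (n - k)! * (k ^ k * (n - k) ^ (n - k)) := by
        rw [Nat.choose_mul_factorial_mul_factorial hj, Nat.choose_mul_factorial_mul_factorial hk]
    _ = k ! * (n - k)! * (n.choose k * (k ^ k * (n - k) ^ (n - k))) := by ring

lemma pow_self_le_succ_mul_choose_mul {n k : ℕ} (hk : k ≤ n) :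
    n ^ n ≤ (n + 1) * (n.choose k * (k ^ k * (n - k) ^ (n - k))) := by
  calc n ^ n = (k + (n - k)) ^ n := by rw [Nat.add_sub_of_le hk]
    _ = ∑ j ∈ range (n + 1), n.choose j * (k ^ j * (n - k) ^ (n - j)) := by
        rw [add_pow]
        exact sum_congr rfl fun j _ ↦ by rw [Nat.cast_id, mul_comm]
    _ ≤ ∑ _j ∈ range (n + 1), n.choose k * (k ^ k * (n - k) ^ (n - k)) :=
        sum_le_sum fun j hj ↦ choose_mul_pow_mul_pow_le (mem_range_succ_iff.1 hj) hk
    _ = (n + 1) * (n.choose k * (k ^ k * (n - k) ^ (n - k))) := by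
        rw [sum_const, card_range, smul_eq_mul]

lemma one_le_succ_mul_choose_mul_pow_mul_pow {n k : ℕ} (hk : k ≤ n) :
    (1 : ℝ) ≤ (n + 1) * n.choose k * ((k / n) ^ k * (1 - k / n) ^ (n - k)) := by
  rcases n.eq_zero_or_pos with rfl | hn
  · simp [Nat.le_zero.1 hk]
  have hn₀ : (n : ℝ) ≠ 0 := by positivity
  have hmode : (n ^ n : ℝ) ≤ (n + 1) * (n.choose k * (k ^ k * (n - k : ℕ) ^ (n - k))) :=
    mod_cast pow_self_le_succ_mul_choose_mul hk
  calc (1 : ℝ) ≤ (n + 1) * (n.choose k * (k ^ k * (n - k : ℕ) ^ (n - k))) / n ^ n :=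
        (one_le_div (by positivity)).2 hmode
    _ = (n + 1) * n.choose k * ((k / n) ^ k * (1 - k / n) ^ (n - k)) := by
        rw [one_sub_div hn₀, ← Nat.cast_sub hk, div_pow, div_pow, div_mul_div_comm,
          pow_mul_pow_sub _ hk, mul_div_assoc', mul_assoc]

end Binomial

section TwoPoint

variable {p : ℝ}

lemma two_le_one_add_rpow_add_one_sub_rpow {r t : ℝ} (hr : r ≤ 0) (ht : t ∈ Set.Ioo (-1) 1) :
    2 ≤ (1 + t) ^ r + (1 - t) ^ r := by
  obtain ⟨ht₁, ht₂⟩ := ht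
  have hprod : 1 ≤ (1 + t) ^ r * (1 - t) ^ r := by
    rw [← Real.mul_rpow (by linarith) (by linarith)]
    exact Real.one_le_rpow_of_pos_of_le_one_of_nonpos
      (mul_pos (by linarith) (by linarith)) (by linarith [sq_nonneg t]) hr
  nlinarith [sq_nonneg ((1 + t) ^ r - (1 - t) ^ r),
    Real.rpow_pos_of_pos (by linarith : 0 < 1 + t) r,
    Real.rpow_pos_of_pos (by linarith : 0 < 1 - t) r]

lemma hasDerivAt_one_add_rpow {r t : ℝ} (ht : 0 < 1 + t) :
    HasDerivAt (fun s : ℝ ↦ (1 + s) ^ r) (r * (1 + t) ^ (r - 1)) t := by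
  simpa using ((hasDerivAt_id t).const_add 1).rpow_const (p := r) (Or.inl ht.ne')

lemma hasDerivAt_one_sub_rpow {r t : ℝ} (ht : 0 < 1 - t) :
    HasDerivAt (fun s : ℝ ↦ (1 - s) ^ r) (-(r * (1 - t) ^ (r - 1))) t := by
  simpa using ((hasDerivAt_id t).const_sub 1).rpow_const (p := r) (Or.inl ht.ne')

lemma convexOn_one_add_rpow_add_one_sub_rpow_sub_sq (hp₁ : 1 ≤ p) (hp₂ : p ≤ 2) :
    ConvexOn ℝ (Set.Icc (-1) 1)
      fun t : ℝ ↦ (1 + t) ^ p + (1 - t) ^ p - p * (p - 1) * t ^ 2 := by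
  refine convexOn_of_hasDerivWithinAt2_nonneg (convex_Icc _ _)
    (f' := fun t ↦ p * (1 + t) ^ (p - 1) + -(p * (1 - t) ^ (p - 1)) - p * (p - 1) * (2 * t))
    (f'' := fun t ↦ p * ((p - 1) * (1 + t) ^ (p - 1 - 1)) +
      -(p * -((p - 1) * (1 - t) ^ (p - 1 - 1))) - p * (p - 1) * 2)
    ?_ ?_ ?_ ?_
  · have hp₀ : 0 ≤ p := by linarith
    exact ContinuousOn.sub (.add (.rpow_const (by fun_prop) fun _ _ ↦ Or.inr hp₀)
      (.rpow_const (by fun_prop) fun _ _ ↦ Or.inr hp₀)) (by fun_prop)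
  all_goals
    intro t ht
    rw [interior_Icc] at ht
    have hadd : 0 < 1 + t := by linarith [ht.1]
    have hsub : 0 < 1 - t := by linarith [ht.2]
  · refine ((hasDerivAt_one_add_rpow hadd).add (hasDerivAt_one_sub_rpow hsub)).sub ?_
      |>.hasDerivWithinAt
    simpa using (hasDerivAt_pow 2 t).const_mul (p * (p - 1))
  · refine (((hasDerivAt_one_add_rpow hadd).const_mul p).add
      ((hasDerivAt_one_sub_rpow hsub).const_mul p).neg).sub ?_ |>.hasDerivWithinAt
    simpa using ((hasDerivAt_id t).const_mul 2).const_mul (p * (p - 1))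
  · have hcoef : 0 ≤ p * (p - 1) := mul_nonneg (by linarith) (by linarith)
    have := two_le_one_add_rpow_add_one_sub_rpow (r := p - 1 - 1) (by linarith) ht
    nlinarith

/- The difference of the two sides is an even convex function of `t`, hence minimal at `0`. -/
lemma two_add_mul_sq_le_one_add_rpow_add_one_sub_rpow (hp₁ : 1 ≤ p) (hp₂ : p ≤ 2) {t : ℝ}
    (ht : t ∈ Set.Icc (-1) 1) :
    2 + p * (p - 1) * t ^ 2 ≤ (1 + t) ^ p + (1 - t) ^ p := by
  have hneg : -t ∈ Set.Icc (-1 : ℝ) 1 := ⟨by linarith [ht.2], by linarith [ht.1]⟩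
  have hmid := (convexOn_one_add_rpow_add_one_sub_rpow_sub_sq hp₁ hp₂).2 ht hneg
    (by norm_num : (0 : ℝ) ≤ 1 / 2) (by norm_num : (0 : ℝ) ≤ 1 / 2) (by norm_num)
  have hzero : 1 / 2 * t + 1 / 2 * -t = 0 := by ring
  simp only [smul_eq_mul, hzero, add_zero, sub_zero, Real.one_rpow, sub_neg_eq_add,
    ← sub_eq_add_neg, neg_sq] at hmid
  linarith

lemma one_add_mul_sq_rpow_le (hp₁ : 1 ≤ p) (hp₂ : p ≤ 2) {t : ℝ} (ht : t ∈ Set.Icc (-1) 1) :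
    (1 + (p - 1) * t ^ 2) ^ (p / 2) ≤ ((1 + t) ^ p + (1 - t) ^ p) / 2 := by
  have hcoef : 0 ≤ (p - 1) * t ^ 2 := mul_nonneg (by linarith) (sq_nonneg t)
  calc (1 + (p - 1) * t ^ 2) ^ (p / 2)
      ≤ 1 + p / 2 * ((p - 1) * t ^ 2) :=
        rpow_one_add_le_one_add_mul_self (by linarith) (by linarith) (by linarith)
    _ ≤ ((1 + t) ^ p + (1 - t) ^ p) / 2 := by
        linarith [two_add_mul_sq_le_one_add_rpow_add_one_sub_rpow hp₁ hp₂ ht]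

lemma sq_add_mul_sq_le_rpow_add_rpow (hp₁ : 1 ≤ p) (hp₂ : p ≤ 2) {a b : ℝ}
    (ha : 0 ≤ a) (hb : 0 ≤ b) :
    ((a + b) / 2) ^ 2 + (p - 1) * ((a - b) / 2) ^ 2 ≤ ((a ^ p + b ^ p) / 2) ^ (2 / p) := by
  have hp₀ : 0 < p := by linarith
  rcases (add_nonneg ha hb).eq_or_lt with hab | hab
  · obtain ⟨rfl, rfl⟩ := (add_eq_zero_iff_of_nonneg ha hb).1 hab.symm
    simpa using Real.rpow_nonneg (Real.rpow_nonneg le_rfl p) (2 / p)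
  obtain ⟨u, hu⟩ : ∃ u, u = (a + b) / 2 := ⟨_, rfl⟩
  obtain ⟨t, ht⟩ : ∃ t, t = (a - b) / (a + b) := ⟨_, rfl⟩
  have hu₀ : 0 < u := by rw [hu]; positivity
  have hut : u * t = (a - b) / 2 := by rw [hu, ht]; field_simp
  have ht₁ : t ∈ Set.Icc (-1) 1 := by
    rw [ht, Set.mem_Icc, le_div_iff₀ hab, div_le_one hab]
    constructor <;> linarith
  have hta : 0 ≤ 1 + t := by linarith [ht₁.1]
  have htb : 0 ≤ 1 - t := by linarith [ht₁.2]
  have ha' : a = u * (1 + t) := by linarith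
  have hb' : b = u * (1 - t) := by linarith
  have hbase : 0 ≤ 1 + (p - 1) * t ^ 2 :=
    add_nonneg zero_le_one (mul_nonneg (by linarith) (sq_nonneg t))
  calc ((a + b) / 2) ^ 2 + (p - 1) * ((a - b) / 2) ^ 2
      = u ^ 2 * (1 + (p - 1) * t ^ 2) := by rw [← hu, ← hut]; ring
    _ = (u ^ p) ^ (2 / p) * ((1 + (p - 1) * t ^ 2) ^ (p / 2)) ^ (2 / p) := by
        rw [← Real.rpow_mul hu₀.le, ← Real.rpow_mul hbase, mul_div_cancel₀ _ hp₀.ne',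
          div_mul_div_cancel₀ two_ne_zero, div_self hp₀.ne', Real.rpow_one, Real.rpow_two]
    _ ≤ (u ^ p) ^ (2 / p) * (((1 + t) ^ p + (1 - t) ^ p) / 2) ^ (2 / p) := by
        gcongr
        exact one_add_mul_sq_rpow_le hp₁ hp₂ ht₁
    _ = ((a ^ p + b ^ p) / 2) ^ (2 / p) := by
        rw [← Real.mul_rpow (by positivity) (by positivity), ha', hb', Real.mul_rpow hu₀.le hta,
          Real.mul_rpow hu₀.le htb, ← mul_div_assoc, mul_add]

lemma mul_add_mul_le_of_sq_add_mul_sq_le {ρ u v s t M N : ℝ} (hρ : 0 ≤ ρ) (hM : 0 ≤ M)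
    (hN : 0 ≤ N) (huv : u ^ 2 + ρ * v ^ 2 ≤ M ^ 2) (hst : s ^ 2 + ρ * t ^ 2 ≤ N ^ 2) :
    u * s + ρ * (v * t) ≤ M * N := by
  refine (abs_le_of_sq_le_sq' ?_ (mul_nonneg hM hN)).2
  calc (u * s + ρ * (v * t)) ^ 2
      ≤ (u * s + ρ * (v * t)) ^ 2 + ρ * (u * t - v * s) ^ 2 :=
        le_add_of_nonneg_right (mul_nonneg hρ (sq_nonneg _))
    _ = (u ^ 2 + ρ * v ^ 2) * (s ^ 2 + ρ * t ^ 2) := by ring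
    _ ≤ M ^ 2 * N ^ 2 := by gcongr
    _ = (M * N) ^ 2 := by ring

end TwoPoint

section ContractiveForm

open scoped BigOperators

variable {α β γ δ : Type*} [Fintype α] [Fintype β] [Fintype γ] [Fintype δ] {p q : ℝ}

/-- The bilinear form `(f, g) ↦ 𝔼 a, 𝔼 b, K a b * (f a * g b)` is bounded by `‖f‖_p * ‖g‖_q` on
nonnegative functions, where the norms, like the form, are taken with respect to the uniform
probability measures. For `q` conjugate to `r` this says that the operator with kernel `K` is a
contraction from `L^p` to `L^r`; unlike the operator statement, it tensorizes symmetrically. -/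
def IsContractiveForm (p q : ℝ) (K : α → β → ℝ) : Prop :=
  ∀ ⦃f : α → ℝ⦄ ⦃g : β → ℝ⦄, (∀ a, 0 ≤ f a) → (∀ b, 0 ≤ g b) →
    𝔼 a, 𝔼 b, K a b * (f a * g b) ≤ (𝔼 a, f a ^ p) ^ (1 / p) * (𝔼 b, g b ^ q) ^ (1 / q)

namespace IsContractiveForm

lemma of_equiv {K : α → β → ℝ} (e : γ ≃ α) (e' : δ ≃ β)
    (h : IsContractiveForm p q fun c d ↦ K (e c) (e' d)) : IsContractiveForm p q K := by
  intro f g hf hg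
  have h' := h (f := f ∘ e) (g := g ∘ e') (fun _ ↦ hf _) fun _ ↦ hg _
  simp only [Function.comp_apply] at h'
  rwa [Fintype.expect_equiv e _ (fun a ↦ f a ^ p) fun _ ↦ rfl,
    Fintype.expect_equiv e' _ (fun b ↦ g b ^ q) fun _ ↦ rfl,
    Fintype.expect_equiv e _ (fun a ↦ 𝔼 b, K a b * (f a * g b))
      fun c ↦ Fintype.expect_equiv e' _ (fun b ↦ K (e c) b * (f (e c) * g b)) fun _ ↦ rfl] at h'

lemma one_of_unique [Unique α] [Unique β] (hp : p ≠ 0) (hq : q ≠ 0) :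
    IsContractiveForm p q fun (_ : α) (_ : β) ↦ 1 := by
  intro f g hf hg
  simp only [univ_unique, expect_singleton, one_mul, one_div]
  rw [Real.rpow_rpow_inv (hf _) hp, Real.rpow_rpow_inv (hg _) hq]

lemma prod {K : α → β → ℝ} {L : γ → δ → ℝ} (hp : p ≠ 0) (hq : q ≠ 0) (hK₀ : ∀ a b, 0 ≤ K a b)
    (hK : IsContractiveForm p q K) (hL : IsContractiveForm p q L) :
    IsContractiveForm p q fun (x : α × γ) (y : β × δ) ↦ K x.1 y.1 * L x.2 y.2 := by
  intro f g hf hg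
  have hf_pow (a : α) : 0 ≤ 𝔼 c, f (a, c) ^ p := expect_nonneg fun _ _ ↦ Real.rpow_nonneg (hf _) _
  have hg_pow (b : β) : 0 ≤ 𝔼 d, g (b, d) ^ q := expect_nonneg fun _ _ ↦ Real.rpow_nonneg (hg _) _
  calc 𝔼 x, 𝔼 y, K x.1 y.1 * L x.2 y.2 * (f x * g y)
      = 𝔼 a, 𝔼 b, K a b * 𝔼 c, 𝔼 d, L c d * (f (a, c) * g (b, d)) := by
        simp only [← univ_product_univ, expect_product, mul_expect, mul_assoc]
        exact expect_congr rfl fun a _ ↦ expect_comm _ _ _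
    _ ≤ 𝔼 a, 𝔼 b, K a b * ((𝔼 c, f (a, c) ^ p) ^ (1 / p) * (𝔼 d, g (b, d) ^ q) ^ (1 / q)) :=
        expect_le_expect fun a _ ↦ expect_le_expect fun b _ ↦
          mul_le_mul_of_nonneg_left (hL (fun _ ↦ hf _) fun _ ↦ hg _) (hK₀ a b)
    _ ≤ (𝔼 a, ((𝔼 c, f (a, c) ^ p) ^ (1 / p)) ^ p) ^ (1 / p) *
          (𝔼 b, ((𝔼 d, g (b, d) ^ q) ^ (1 / q)) ^ q) ^ (1 / q) :=
        hK (fun a ↦ Real.rpow_nonneg (hf_pow a) _) fun b ↦ Real.rpow_nonneg (hg_pow b) _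
    _ = (𝔼 x, f x ^ p) ^ (1 / p) * (𝔼 y, g y ^ q) ^ (1 / q) := by
        simp only [one_div, Real.rpow_inv_rpow (hf_pow _) hp, Real.rpow_inv_rpow (hg_pow _) hq,
          ← univ_product_univ, expect_product]

lemma pi {K : α → β → ℝ} (hp : p ≠ 0) (hq : q ≠ 0) (hK₀ : ∀ a b, 0 ≤ K a b)
    (hK : IsContractiveForm p q K) (n : ℕ) :
    IsContractiveForm p q fun (x : Fin n → α) (y : Fin n → β) ↦ ∏ i, K (x i) (y i) := by
  induction n with
  | zero => simpa only [univ_eq_empty, prod_empty] using one_of_unique hp hq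
  | succ n ih =>
    refine of_equiv (Fin.consEquiv fun _ ↦ α) (Fin.consEquiv fun _ ↦ β) ?_
    simpa only [Fin.prod_univ_succ, Fin.consEquiv_apply, Fin.cons_zero, Fin.cons_succ]
      using hK.prod hp hq hK₀ ih

lemma sum_sum_le {K : α → β → ℝ} (hp : p ≠ 0) (hq : q ≠ 0) (hK : IsContractiveForm p q K)
    (A : Finset α) (B : Finset β) :
    ∑ a ∈ A, ∑ b ∈ B, K a b ≤ Fintype.card α * Fintype.card β *
      ((#A / Fintype.card α : ℝ) ^ (1 / p) * (#B / Fintype.card β : ℝ) ^ (1 / q)) := by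
  classical
  have hpow {r : ℝ} (hr : r ≠ 0) {P : Prop} [Decidable P] :
      (if P then 1 else 0 : ℝ) ^ r = if P then 1 else 0 := by
    split_ifs
    exacts [Real.one_rpow r, Real.zero_rpow hr]
  calc ∑ a ∈ A, ∑ b ∈ B, K a b
      = ∑ a, ∑ b, K a b * ((if a ∈ A then 1 else 0) * if b ∈ B then 1 else 0) := by
        simp only [mul_ite, mul_one, mul_zero, sum_ite_mem, univ_inter, sum_ite_irrel,
          sum_const_zero]
    _ = Fintype.card α * Fintype.card β *
          𝔼 a, 𝔼 b, K a b * ((if a ∈ A then 1 else 0) * if b ∈ B then 1 else 0) := by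
        simp only [← Fintype.card_mul_expect, mul_expect, mul_assoc]
    _ ≤ Fintype.card α * Fintype.card β * ((𝔼 a, (if a ∈ A then 1 else 0 : ℝ) ^ p) ^ (1 / p) *
          (𝔼 b, (if b ∈ B then 1 else 0 : ℝ) ^ q) ^ (1 / q)) := by
        gcongr
        exact hK (fun _ ↦ by positivity) fun _ ↦ by positivity
    _ = Fintype.card α * Fintype.card β *
          ((#A / Fintype.card α : ℝ) ^ (1 / p) * (#B / Fintype.card β : ℝ) ^ (1 / q)) := by
        simp only [hpow hp, hpow hq, Fintype.expect_eq_sum_div_card, sum_boole, filter_univ_mem]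

end IsContractiveForm

/- The kernel is the density of the transition probabilities of the binary symmetric channel with
crossover probability `ε`, whose correlation is `1 - 2 * ε = p - 1` for `p = 2 * (1 - ε)`. -/
lemma isContractiveForm_two_mul_ite {ε : ℝ} (hε₀ : 0 ≤ ε) (hε₁ : ε ≤ 1 / 2) :
    IsContractiveForm (2 * (1 - ε)) (2 * (1 - ε))
      fun a b : Bool ↦ 2 * if a = b then 1 - ε else ε := by
  intro f g hf hg
  obtain ⟨p, hp⟩ : ∃ p, p = 2 * (1 - ε) := ⟨_, rfl⟩
  rw [← hp]
  have hp₁ : 1 ≤ p := by linarith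
  have hp₂ : p ≤ 2 := by linarith
  have hbool (h : Bool → ℝ) : 𝔼 a, h a = (h true + h false) / 2 := by
    rw [Fintype.expect_eq_sum_div_card, Fintype.sum_bool, Fintype.card_bool, Nat.cast_two]
  have hnorm {h : Bool → ℝ} (hh : ∀ a, 0 ≤ h a) : 0 ≤ (h true ^ p + h false ^ p) / 2 :=
    div_nonneg (add_nonneg (Real.rpow_nonneg (hh _) p) (Real.rpow_nonneg (hh _) p)) zero_le_two
  have hsq {h : Bool → ℝ} (hh : ∀ a, 0 ≤ h a) :
      ((h true + h false) / 2) ^ 2 + (p - 1) * ((h true - h false) / 2) ^ 2 ≤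
        (((h true ^ p + h false ^ p) / 2) ^ (1 / p)) ^ 2 := by
    rw [← Real.rpow_mul_natCast (hnorm hh), Nat.cast_two, one_div_mul_eq_div]
    exact sq_add_mul_sq_le_rpow_add_rpow hp₁ hp₂ (hh _) (hh _)
  have hcs := mul_add_mul_le_of_sq_add_mul_sq_le (sub_nonneg.2 hp₁)
    (Real.rpow_nonneg (hnorm hf) _) (Real.rpow_nonneg (hnorm hg) _) (hsq hf) (hsq hg)
  simp only [hbool, if_true, reduceCtorEq, if_false]
  refine le_of_eq_of_le ?_ hcs
  rw [hp]
  ring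

end ContractiveForm

section HammingDist

lemma prod_ite_eq_pow_hammingDist {ι α M : Type*} [Fintype ι] [DecidableEq α] [CommMonoid M]
    (x y : ι → α) (a b : M) :
    ∏ i, (if x i = y i then a else b) =
      b ^ hammingDist x y * a ^ (Fintype.card ι - hammingDist x y) := by
  have hcard : #{i | x i = y i} = Fintype.card ι - hammingDist x y :=
    Nat.eq_sub_of_add_eq (card_filter_add_card_filter_not fun i ↦ x i = y i)
  rw [prod_ite, prod_const, prod_const, hcard, mul_comm, hammingDist]

variable {n : ℕ}

lemma card_hammingDist_eq_mul_le {ε : ℝ} (hε₀ : 0 ≤ ε) (hε₁ : ε ≤ 1 / 2) (k : ℕ)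
    (A B : Finset (Fin n → Bool)) :
    (#{q ∈ A ×ˢ B | hammingDist q.1 q.2 = k} : ℝ) * (ε ^ k * (1 - ε) ^ (n - k)) ≤
      2 ^ n * (#A / 2 ^ n * (#B / 2 ^ n)) ^ (1 / (2 * (1 - ε))) := by
  have hε₂ : 0 ≤ 1 - ε := by linarith
  have hp₀ : 2 * (1 - ε) ≠ 0 := by linarith
  have hcontr := ((isContractiveForm_two_mul_ite hε₀ hε₁).pi hp₀ hp₀
    (fun _ _ ↦ by positivity) n).sum_sum_le hp₀ hp₀ A B
  simp only [prod_mul_distrib, prod_ite_eq_pow_hammingDist, Fintype.card_fin, Fintype.card_pi,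
    Fintype.card_bool, prod_const, card_univ, Nat.cast_pow, Nat.cast_two, ← mul_sum,
    mul_assoc] at hcontr
  rw [Real.mul_rpow (by positivity) (by positivity)]
  refine le_trans ?_ (le_of_mul_le_mul_left hcontr (by positivity))
  calc (#{q ∈ A ×ˢ B | hammingDist q.1 q.2 = k} : ℝ) * (ε ^ k * (1 - ε) ^ (n - k))
      = ∑ q ∈ A ×ˢ B with hammingDist q.1 q.2 = k,
          ε ^ hammingDist q.1 q.2 * (1 - ε) ^ (n - hammingDist q.1 q.2) := by
        rw [← nsmul_eq_mul, ← sum_const]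
        exact sum_congr rfl fun q hq ↦ by rw [(mem_filter.1 hq).2]
    _ ≤ ∑ q ∈ A ×ˢ B, ε ^ hammingDist q.1 q.2 * (1 - ε) ^ (n - hammingDist q.1 q.2) :=
        sum_le_sum_of_subset_of_nonneg (filter_subset _ _) fun _ _ _ ↦ by positivity
    _ = ∑ x ∈ A, ∑ y ∈ B, ε ^ hammingDist x y * (1 - ε) ^ (n - hammingDist x y) :=
        sum_product _ _ _

theorem card_hammingDist_eq_le {k : ℕ} (hk : 2 * k ≤ n) (A B : Finset (Fin n → Bool)) :
    (#{q ∈ A ×ˢ B | hammingDist q.1 q.2 = k} : ℝ) ≤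
      (n + 1) * (2 ^ n * n.choose k) *
        (#A / 2 ^ n * (#B / 2 ^ n)) ^ (1 / (2 * (1 - k / n : ℝ))) := by
  have hk' : (2 * k : ℝ) ≤ n := mod_cast hk
  have hratio : (k / n : ℝ) ≤ 1 / 2 :=
    div_le_of_le_mul₀ (by positivity) (by norm_num) (by linarith)
  generalize hN : (#{q ∈ A ×ˢ B | hammingDist q.1 q.2 = k} : ℝ) = N
  have hnoise := card_hammingDist_eq_mul_le (by positivity) hratio k A B
  rw [hN] at hnoise
  calc N ≤ N * ((n + 1) * n.choose k * ((k / n) ^ k * (1 - k / n) ^ (n - k))) :=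
        le_mul_of_one_le_right (hN ▸ Nat.cast_nonneg _)
          (one_le_succ_mul_choose_mul_pow_mul_pow (by lia))
    _ = (n + 1) * n.choose k * (N * ((k / n) ^ k * (1 - k / n) ^ (n - k))) := by ring
    _ ≤ (n + 1) * n.choose k *
          (2 ^ n * (#A / 2 ^ n * (#B / 2 ^ n)) ^ (1 / (2 * (1 - k / n : ℝ)))) := by gcongr
    _ = _ := by ring

end HammingDist

section Asymptotics

variable {τ ε : ℝ} {n : ℕ}

lemma floor_mul_le (hε : ε ≤ 1) : ⌊ε * n⌋₊ ≤ n :=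
  Nat.floor_le_of_le (mul_le_of_le_one_left n.cast_nonneg hε)

lemma two_mul_floor_mul_le (hε₀ : 0 ≤ ε) (hε₁ : ε ≤ 1 / 2) : 2 * ⌊ε * n⌋₊ ≤ n := by
  have hfloor : (⌊ε * n⌋₊ : ℝ) ≤ ε * n := Nat.floor_le (by positivity)
  have hhalf : ε * n ≤ 1 / 2 * n := by gcongr
  exact_mod_cast (by linarith : (2 * ⌊ε * n⌋₊ : ℝ) ≤ n)

lemma Gn_pos (hε : ε ≤ 1) : 0 < Gn ε n :=
  Nat.mul_pos (by positivity) (Nat.choose_pos (floor_mul_le hε))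

lemma Gn_le_two_pow_mul_two_pow : Gn ε n ≤ 2 ^ n * 2 ^ n :=
  Nat.mul_le_mul_left _ (Nat.choose_le_two_pow _ _)

lemma Rn_le {c : ℝ} (hc : 0 ≤ c)
    (h : ∀ A B : Finset (Fin n → Bool), (#A : ℝ) ≤ 2 ^ (τ * n) → (#B : ℝ) ≤ 2 ^ (τ * n) →
      (#{q ∈ A ×ˢ B | hammingDist q.1 q.2 = ⌊ε * n⌋₊} : ℝ) ≤ c) :
    (Rn τ ε n : ℝ) ≤ c := by
  have hs : (0 : ℝ) ≤ 2 ^ (τ * n) := by positivity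
  rw [← Nat.le_floor_iff hc]
  refine Finset.sup_le fun AB hAB ↦ Nat.le_floor ?_
  simp only [mem_product, mem_filter, Nat.le_floor_iff hs] at hAB
  exact h _ _ hAB.1.2 hAB.2.2

lemma card_hammingDist_eq_le_Rn {A B : Finset (Fin n → Bool)} (hA : (#A : ℝ) ≤ 2 ^ (τ * n))
    (hB : (#B : ℝ) ≤ 2 ^ (τ * n)) :
    #{q ∈ A ×ˢ B | hammingDist q.1 q.2 = ⌊ε * n⌋₊} ≤ Rn τ ε n :=
  Finset.le_sup (f := fun AB : Finset (Fin n → Bool) × Finset (Fin n → Bool) ↦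
    #{q ∈ AB.1 ×ˢ AB.2 | hammingDist q.1 q.2 = ⌊ε * n⌋₊}) (b := (A, B)) <| by
      simp [Nat.le_floor hA, Nat.le_floor hB]

lemma exists_hammingDist_eq {k : ℕ} (hk : k ≤ n) : ∃ x y : Fin n → Bool, hammingDist x y = k := by
  obtain ⟨S, -, hS⟩ := exists_subset_card_eq (s := (univ : Finset (Fin n))) (by simpa using hk)
  exact ⟨fun i ↦ decide (i ∈ S), fun _ ↦ false, by simp [hammingDist, hS]⟩

lemma Rn_pos (hε : ε ≤ 1) (hτ : 0 ≤ τ) : 0 < Rn τ ε n := by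
  obtain ⟨x, y, hxy⟩ := exists_hammingDist_eq (floor_mul_le (n := n) hε)
  have hs : (1 : ℝ) ≤ 2 ^ (τ * n) := Real.one_le_rpow one_le_two (by positivity)
  refine lt_of_lt_of_le (card_pos.2 ⟨(x, y), ?_⟩)
    (card_hammingDist_eq_le_Rn (A := {x}) (B := {y}) (by simpa using hs) (by simpa using hs))
  simpa using hxy

lemma rpow_div_two_pow_mul_self_rpow (τ c : ℝ) (n : ℕ) :
    ((2 : ℝ) ^ (τ * n) / 2 ^ n * (2 ^ (τ * n) / 2 ^ n)) ^ (1 / (2 * c)) =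
      2 ^ (-(1 - τ) / c * n) := by
  rw [← Real.rpow_natCast, ← Real.rpow_sub two_pos, ← Real.rpow_add two_pos,
    ← Real.rpow_mul zero_le_two, ← two_mul, mul_one_div, mul_div_mul_left _ _ two_ne_zero]
  ring_nf

lemma Rn_div_Gn_le (hε₀ : 0 ≤ ε) (hε₁ : ε ≤ 1 / 2) :
    (Rn τ ε n / Gn ε n : ℝ) ≤ (n + 1) * 2 ^ (-(1 - τ) / (1 - ⌊ε * n⌋₊ / n) * n : ℝ) := by
  have hG : (0 : ℝ) < Gn ε n := mod_cast Gn_pos (by linarith)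
  have hratio : 0 ≤ (1 - ⌊ε * n⌋₊ / n : ℝ) :=
    sub_nonneg.2 <| div_le_one_of_le₀
    (Nat.cast_le.2 (floor_mul_le (by linarith))) n.cast_nonneg
  rw [div_le_iff₀ hG]
  refine Rn_le (by positivity) fun A B hA hB ↦ ?_
  calc (#{q ∈ A ×ˢ B | hammingDist q.1 q.2 = ⌊ε * n⌋₊} : ℝ)
      ≤ (n + 1) * (2 ^ n * n.choose ⌊ε * n⌋₊) *
          (#A / 2 ^ n * (#B / 2 ^ n)) ^ (1 / (2 * (1 - ⌊ε * n⌋₊ / n : ℝ))) :=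
        card_hammingDist_eq_le (two_mul_floor_mul_le hε₀ hε₁) A B
    _ ≤ (n + 1) * (2 ^ n * n.choose ⌊ε * n⌋₊) *
          (2 ^ (τ * n) / 2 ^ n * (2 ^ (τ * n) / 2 ^ n)) ^
            (1 / (2 * (1 - ⌊ε * n⌋₊ / n : ℝ))) := by gcongr
    _ = (n + 1) * 2 ^ (-(1 - τ) / (1 - ⌊ε * n⌋₊ / n) * n : ℝ) * Gn ε n := by
        rw [rpow_div_two_pow_mul_self_rpow, Gn]
        push_cast
        ring

lemma logb_Rn_div_Gn_div_le (hε₀ : 0 ≤ ε) (hε₁ : ε ≤ 1 / 2) (hτ : 0 ≤ τ) (hn : n ≠ 0) :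
    Real.logb 2 (Rn τ ε n / Gn ε n) / n ≤
      Real.logb 2 (n + 1) / n + -(1 - τ) / (1 - ⌊ε * n⌋₊ / n) := by
  have hR : (0 : ℝ) < Rn τ ε n := mod_cast Rn_pos (by linarith) hτ
  have hG : (0 : ℝ) < Gn ε n := mod_cast Gn_pos (by linarith)
  have hn₀ : (0 : ℝ) < n := by positivity
  rw [div_add' _ _ _ hn₀.ne', div_le_div_iff_of_pos_right hn₀]
  calc Real.logb 2 (Rn τ ε n / Gn ε n)
      ≤ Real.logb 2 ((n + 1) * 2 ^ (-(1 - τ) / (1 - ⌊ε * n⌋₊ / n) * n : ℝ)) :=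
        Real.logb_le_logb_of_le one_lt_two (div_pos hR hG) (Rn_div_Gn_le hε₀ hε₁)
    _ = Real.logb 2 (n + 1) + -(1 - τ) / (1 - ⌊ε * n⌋₊ / n) * n := by
        rw [Real.logb_mul (by positivity) (by positivity),
          Real.logb_rpow two_pos (OfNat.ofNat_ne_one 2)]

lemma neg_two_le_logb_Rn_div_Gn_div (hε : ε ≤ 1) (hτ : 0 ≤ τ) :
    -2 ≤ Real.logb 2 (Rn τ ε n / Gn ε n) / n := by
  have hR : (1 : ℝ) ≤ Rn τ ε n := mod_cast Rn_pos hε hτ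
  have hG : (0 : ℝ) < Gn ε n := mod_cast Gn_pos hε
  have hlogG : Real.logb 2 (Gn ε n) ≤ n + n := by
    calc Real.logb 2 (Gn ε n) ≤ Real.logb 2 (2 ^ (n + n)) :=
          Real.logb_le_logb_of_le one_lt_two hG <| by
            rw [pow_add]; exact_mod_cast Gn_le_two_pow_mul_two_pow
      _ = n + n := by rw [Real.logb_pow, Real.logb_self_eq_one one_lt_two]; push_cast; ring
  rcases n.eq_zero_or_pos with rfl | hn
  · simp
  rw [Real.logb_div (by positivity) hG.ne', le_div_iff₀ (by positivity)]
  linarith [Real.logb_nonneg one_lt_two hR]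

lemma tendsto_logb_add_one_div_atTop :
    Tendsto (fun n : ℕ ↦ Real.logb 2 (n + 1) / n) atTop (nhds 0) := by
  have hsucc : Tendsto (fun n : ℕ ↦ (n + 1 : ℝ)) atTop atTop :=
    tendsto_atTop_add_const_right _ _ tendsto_natCast_atTop_atTop
  simpa [Function.comp_def] using
    (Real.tendsto_pow_logb_div_mul_add_atTop (b := 2) 1 (-1) 1 one_ne_zero).comp hsucc

lemma tendsto_neg_div_one_sub_floor_div (hε₀ : 0 ≤ ε) (hε₁ : ε ≠ 1) :
    Tendsto (fun n : ℕ ↦ -(1 - τ) / (1 - ⌊ε * n⌋₊ / n : ℝ)) atTop (nhds (-(1 - τ) / (1 - ε))) := by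
  have hfloor : Tendsto (fun n : ℕ ↦ (⌊ε * n⌋₊ / n : ℝ)) atTop (nhds ε) :=
    (tendsto_nat_floor_mul_div_atTop hε₀).comp tendsto_natCast_atTop_atTop
  exact tendsto_const_nhds.div (hfloor.const_sub 1) (sub_ne_zero.2 hε₁.symm)

end Asymptotics

theorem stmt13 (ε τ : ℝ) (hε0 : 0 < ε) (hε1 : ε < 1 / 2) (hτ0 : 0 < τ) (hτ1 : τ < 1) :
    limsup (fun n : ℕ => Real.logb 2 ((Rn τ ε n : ℝ) / (Gn ε n : ℝ)) / n) atTop ≤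
      -(1 - τ) / (1 - ε) := by
  have hlim : Tendsto
      (fun n : ℕ ↦ Real.logb 2 (n + 1) / n + -(1 - τ) / (1 - ⌊ε * n⌋₊ / n)) atTop
      (nhds (-(1 - τ) / (1 - ε))) := by
    simpa only [zero_add] using
      tendsto_logb_add_one_div_atTop.add (tendsto_neg_div_one_sub_floor_div hε0.le (by linarith))
  have hle : ∀ᶠ n : ℕ in atTop, Real.logb 2 (Rn τ ε n / Gn ε n) / n ≤
      Real.logb 2 (n + 1) / n + -(1 - τ) / (1 - ⌊ε * n⌋₊ / n) := by
    filter_upwards [eventually_ne_atTop 0] with n hn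
    exact logb_Rn_div_Gn_div_le hε0.le hε1.le hτ0.le hn
  have hbdd : IsBoundedUnder (· ≥ ·) atTop
      fun n : ℕ ↦ Real.logb 2 (Rn τ ε n / Gn ε n : ℝ) / n :=
    isBoundedUnder_of ⟨-2, fun _ ↦ neg_two_le_logb_Rn_div_Gn_div (by linarith) hτ0.le⟩
  exact (limsup_le_limsup hle hbdd.isCoboundedUnder_le hlim.isBoundedUnder_le).trans_eq
    hlim.limsup_eq
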